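/- Let p ∈ (0,1/2], r ∈ ℕ with r ≥ 1, and δ > 0. Suppose f : {0,1}^n → {0,1} satisfies I_S(f^{≤r}) ≤ δ for every nonempty S ⊆ [n] with |S| ≤ r. Then ‖f^{≤r}‖₂² ≤ μ_p(f)² + 5^{r−1}·δ^{1/3}·σ²·I[f]. -/

import Mathlib

open Finset

namespace GlobalHC

variable {n : ℕ}

/-- Expectation with respect to the `p`-biased measure on `{0,1}^n`. -/
noncomputable def Ep (p : ℝ) (f : (Fin n → Bool) → ℝ) : ℝ :=
  ∑ x : Fin n → Bool, (∏ i, if x i then p else 1 - p) * f x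

/-- The `r`-norm with respect to the `p`-biased measure. -/
noncomputable def pnorm (p r : ℝ) (f : (Fin n → Bool) → ℝ) : ℝ :=
  (Ep p fun x => |f x| ^ r) ^ (1 / r)

/-- The `p`-biased character `χ_S`. -/
noncomputable def chi (p : ℝ) (S : Finset (Fin n)) (x : Fin n → Bool) : ℝ :=
  ∏ i ∈ S, ((if x i then (1 : ℝ) else 0) - p) / Real.sqrt (p * (1 - p))

/-- The `p`-biased Fourier coefficient `f̂(S)`. -/
noncomputable def coeff (p : ℝ) (f : (Fin n → Bool) → ℝ) (S : Finset (Fin n)) : ℝ :=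
  Ep p fun x => f x * chi p S x

/-- The derivative `D_S f = Σ_{T ⊇ S} f̂(T) χ_{T∖S}`. -/
noncomputable def derivS (p : ℝ) (S : Finset (Fin n)) (f : (Fin n → Bool) → ℝ) :
    (Fin n → Bool) → ℝ :=
  fun x => ∑ T ∈ Finset.univ.filter (fun T => S ⊆ T), coeff p f T * chi p (T \ S) x

/-- The generalised influence `I_S(f) = σ^{-2|S|} Σ_{T ⊇ S} f̂(T)²`. -/
noncomputable def genInf (p : ℝ) (S : Finset (Fin n)) (f : (Fin n → Bool) → ℝ) : ℝ :=
  (∑ T ∈ Finset.univ.filter (fun T => S ⊆ T), coeff p f T ^ 2) / (p * (1 - p)) ^ S.card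

/-- The noise operator `T_ρ f = Σ_S ρ^{|S|} f̂(S) χ_S`. -/
noncomputable def noise (p ρ : ℝ) (f : (Fin n → Bool) → ℝ) : (Fin n → Bool) → ℝ :=
  fun x => ∑ S : Finset (Fin n), ρ ^ S.card * coeff p f S * chi p S x

/-- The degree-`r` truncation `f^{≤ r}`. -/
noncomputable def trunc (p : ℝ) (r : ℕ) (f : (Fin n → Bool) → ℝ) : (Fin n → Bool) → ℝ :=
  fun x => ∑ S ∈ Finset.univ.filter (fun S : Finset (Fin n) => S.card ≤ r),
    coeff p f S * chi p S x

/-- The restriction `f_{J→1}` setting all coordinates in `J` to `1`. -/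
def restrict1 (J : Finset (Fin n)) (f : (Fin n → Bool) → ℝ) : (Fin n → Bool) → ℝ :=
  fun x => f (fun i => if i ∈ J then true else x i)

/-- `f` is `(r,δ)`-global (for the `p`-biased measure). -/
def IsGlobal (p r δ : ℝ) (f : (Fin n → Bool) → ℝ) : Prop :=
  ∀ J : Finset (Fin n), (J.card : ℝ) ≤ r → Ep p (restrict1 J f) ≤ Ep p f + δ

/-- The total influence `I[f] = Σ_i Pr_{μ_p}[f(x ⊕ e_i) ≠ f(x)]`. -/
noncomputable def totalInf (p : ℝ) (f : (Fin n → Bool) → ℝ) : ℝ :=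
  ∑ i : Fin n, Ep p fun x => if f (Function.update x i (!x i)) = f x then 0 else 1

/-- Noise stability `Stab_ρ(f) = Σ_S ρ^{|S|} f̂(S)²` (w.r.t. `μ_p`). -/
noncomputable def stab (p ρ : ℝ) (f : (Fin n → Bool) → ℝ) : ℝ :=
  ∑ S : Finset (Fin n), ρ ^ S.card * coeff p f S ^ 2

/-- `f` is monotone. -/
def Mono (f : (Fin n → Bool) → ℝ) : Prop :=
  ∀ x y : Fin n → Bool, (∀ i, x i ≤ y i) → f x ≤ f y



lemma Ep_mono {p : ℝ} (hp : 0 < p) (hp' : p ≤ 1/2) {g h : (Fin n → Bool) → ℝ}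
    (H : ∀ x, g x ≤ h x) : Ep p g ≤ Ep p h := by
  unfold Ep
  apply Finset.sum_le_sum
  intro x _
  apply mul_le_mul_of_nonneg_left (H x)
  apply Finset.prod_nonneg
  intro i _
  split_ifs <;> linarith

lemma Ep_add (p : ℝ) (g h : (Fin n → Bool) → ℝ) :
    Ep p (fun x => g x + h x) = Ep p g + Ep p h := by
  unfold Ep
  rw [← Finset.sum_add_distrib]
  exact Finset.sum_congr rfl fun x _ => by ring

lemma Ep_const_mul (p c : ℝ) (g : (Fin n → Bool) → ℝ) :
    Ep p (fun x => c * g x) = c * Ep p g := by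
  unfold Ep
  rw [Finset.mul_sum]
  exact Finset.sum_congr rfl fun x _ => by ring

lemma Ep_sum {κ : Type*} (p : ℝ) (s : Finset κ) (g : κ → (Fin n → Bool) → ℝ) :
    Ep p (fun x => ∑ k ∈ s, g k x) = ∑ k ∈ s, Ep p (g k) := by
  unfold Ep
  rw [Finset.sum_comm]
  exact Finset.sum_congr rfl fun x _ => by rw [Finset.mul_sum]

lemma Ep_split (p : ℝ) (i : Fin n) (g : (Fin n → Bool) → ℝ) :
    Ep p g = Ep p (fun x => p * g (Function.update x i true)
      + (1 - p) * g (Function.update x i false)) := by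
  have hflip : ∀ F : (Fin n → Bool) → ℝ,
      ∑ x, F (Function.update x i (!x i)) = ∑ x, F x := by
    intro F
    have hinv : Function.Involutive
        (fun x : Fin n → Bool => Function.update x i (!x i)) := by
      intro x
      simp
    exact Equiv.sum_comp hinv.toPerm F
  have key : ∀ F : (Fin n → Bool) → ℝ, 2 * ∑ x, F x
      = ∑ x, (F (Function.update x i true) + F (Function.update x i false)) := by
    intro F
    rw [two_mul]
    nth_rewrite 2 [← hflip F]
    rw [← Finset.sum_add_distrib]
    apply Finset.sum_congr rfl
    intro x _
    cases hx : x i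
    · have : Function.update x i false = x := by rw [← hx]; simp
      rw [this]; simp [add_comm]
    · have : Function.update x i true = x := by rw [← hx]; simp
      rw [this]; simp
  have hw : ∀ (x : Fin n → Bool) (b : Bool),
      (∏ j, if Function.update x i b j then p else 1 - p)
        = (if b then p else 1 - p) * ∏ j ∈ Finset.univ.erase i, if x j then p else 1 - p := by
    intro x b
    rw [← Finset.mul_prod_erase Finset.univ _ (Finset.mem_univ i)]
    congr 1
    · simp
    · apply Finset.prod_congr rfl
      intro j hj
      rw [Function.update_of_ne (Finset.ne_of_mem_erase hj)]
  have : 2 * Ep p g = 2 * Ep p (fun x => p * g (Function.update x i true)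
      + (1 - p) * g (Function.update x i false)) := by
    unfold Ep
    rw [key, key]
    apply Finset.sum_congr rfl
    intro x _
    rw [hw, hw]
    simp
    ring
  linarith

lemma Ep_one (p : ℝ) : Ep p (fun _ : Fin n → Bool => (1:ℝ)) = 1 := by
  unfold Ep
  simp only [mul_one]
  have := Finset.prod_univ_sum (fun _ : Fin n => (Finset.univ : Finset Bool))
    (fun _ b => if b then p else 1 - p)
  simp only [Fintype.piFinset_univ] at this
  rw [← this]
  simp

/-- single-coordinate character -/
noncomputable def phi (p : ℝ) (i : Fin n) (x : Fin n → Bool) : ℝ :=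
  ((if x i then (1 : ℝ) else 0) - p) / Real.sqrt (p * (1 - p))

lemma chi_insert (p : ℝ) {i : Fin n} {S : Finset (Fin n)} (h : i ∉ S) (x : Fin n → Bool) :
    chi p (insert i S) x = phi p i x * chi p S x := by
  unfold chi phi
  rw [Finset.prod_insert h]

lemma chi_update (p : ℝ) {i : Fin n} {S : Finset (Fin n)} (h : i ∉ S) (x : Fin n → Bool)
    (b : Bool) : chi p S (Function.update x i b) = chi p S x := by
  unfold chi
  apply Finset.prod_congr rfl
  intro j hj
  rw [Function.update_of_ne (by rintro rfl; exact h hj)]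

lemma phi_true (p : ℝ) (i : Fin n) (x : Fin n → Bool) :
    phi p i (Function.update x i true) = (1 - p) / Real.sqrt (p * (1 - p)) := by
  simp [phi]

lemma phi_false (p : ℝ) (i : Fin n) (x : Fin n → Bool) :
    phi p i (Function.update x i false) = (- p) / Real.sqrt (p * (1 - p)) := by
  simp [phi]

lemma chi_orth {p : ℝ} (hp : 0 < p) (hp' : p ≤ 1/2) (S T : Finset (Fin n)) :
    Ep p (fun x => chi p S x * chi p T x) = if S = T then 1 else 0 := by
  have hs : 0 < p * (1 - p) := by nlinarith
  have hs2 : Real.sqrt (p * (1 - p)) ^ 2 = p * (1 - p) := Real.sq_sqrt hs.le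
  have hs0 : Real.sqrt (p * (1 - p)) ≠ 0 := (Real.sqrt_pos.2 hs).ne'
  have aux : ∀ (S T : Finset (Fin n)) (i : Fin n), i ∈ S → i ∉ T →
      Ep p (fun x => chi p S x * chi p T x) = 0 := by
    intro S T i hi hiT
    rw [Ep_split p i]
    have : ∀ x : Fin n → Bool, p * (chi p S (Function.update x i true)
        * chi p T (Function.update x i true)) + (1 - p) *
        (chi p S (Function.update x i false) * chi p T (Function.update x i false)) = 0 * 1 := by
      intro x
      rw [← Finset.insert_erase hi]
      rw [chi_insert p (Finset.notMem_erase i S), chi_insert p (Finset.notMem_erase i S),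
        chi_update p (Finset.notMem_erase i S), chi_update p (Finset.notMem_erase i S),
        chi_update p hiT, chi_update p hiT, phi_true, phi_false]
      field_simp
      ring
    simp only [this]
    simp [Ep]
  split_ifs with h
  · subst h
    induction S using Finset.induction_on with
    | empty => simpa [chi] using Ep_one (n := n) p
    | insert i S hi ih =>
      rw [Ep_split p i]
      refine Eq.trans ?_ ih
      congr 1
      funext x
      rw [chi_insert p hi, chi_insert p hi, chi_update p hi, chi_update p hi, phi_true, phi_false]
      field_simp
      rw [hs2]
      ring
  · by_cases h1 : S ⊆ T
    · have h2 : ¬ T ⊆ S := fun h2 => h (Finset.Subset.antisymm h1 h2)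
      obtain ⟨i, hi, hiT⟩ := Finset.not_subset.1 h2
      rw [← aux T S i hi hiT]
      congr 1
      funext x
      ring
    · obtain ⟨i, hi, hiT⟩ := Finset.not_subset.1 h1
      exact aux S T i hi hiT

/-- multilinear polynomial with coefficients `a`, supported on subsets of `U` -/
noncomputable def poly (p : ℝ) (U : Finset (Fin n)) (a : Finset (Fin n) → ℝ)
    (x : Fin n → Bool) : ℝ := ∑ S ∈ U.powerset, a S * chi p S x

/-- weighted tail sums -/
noncomputable def wt (U : Finset (Fin n)) (a : Finset (Fin n) → ℝ) (S : Finset (Fin n)) : ℝ :=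
  ∑ T ∈ U.powerset, if S ⊆ T then 4 ^ T.card * a T ^ 2 else 0

lemma wt_nonneg (U : Finset (Fin n)) (a : Finset (Fin n) → ℝ) (S : Finset (Fin n)) :
    0 ≤ wt U a S := by
  unfold wt
  apply Finset.sum_nonneg
  intro T _
  split_ifs <;> positivity

lemma poly_insert (p : ℝ) {U : Finset (Fin n)} {i : Fin n} (hi : i ∉ U)
    (a : Finset (Fin n) → ℝ) (x : Fin n → Bool) :
    poly p (insert i U) a x = poly p U a x + phi p i x * poly p U (fun S => a (insert i S)) x := by
  unfold poly
  rw [Finset.sum_powerset_insert hi, Finset.mul_sum]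
  congr 1
  apply Finset.sum_congr rfl
  intro S hS
  rw [chi_insert p (fun h => hi (Finset.mem_powerset.1 hS h))]
  ring

lemma poly_update (p : ℝ) {U : Finset (Fin n)} {i : Fin n} (hi : i ∉ U)
    (a : Finset (Fin n) → ℝ) (x : Fin n → Bool) (b : Bool) :
    poly p U a (Function.update x i b) = poly p U a x := by
  unfold poly
  apply Finset.sum_congr rfl
  intro S hS
  rw [chi_update p (fun h => hi (Finset.mem_powerset.1 hS h))]

lemma wt_insert1 {U : Finset (Fin n)} {i : Fin n} (hi : i ∉ U)
    (a : Finset (Fin n) → ℝ) {S : Finset (Fin n)} (hS : S ⊆ U) :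
    wt (insert i U) a S = wt U a S + 4 * wt U (fun S => a (insert i S)) S := by
  unfold wt
  rw [Finset.sum_powerset_insert hi, Finset.mul_sum]
  congr 1
  apply Finset.sum_congr rfl
  intro T hT
  have hiT : i ∉ T := fun h => hi (Finset.mem_powerset.1 hT h)
  have hiS : i ∉ S := fun h => hi (hS h)
  rw [Finset.card_insert_of_notMem hiT]
  have : S ⊆ insert i T ↔ S ⊆ T := Finset.subset_insert_iff_of_notMem hiS
  simp only [this]
  split_ifs
  · ring
  · ring

lemma wt_insert2 {U : Finset (Fin n)} {i : Fin n} (hi : i ∉ U)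
    (a : Finset (Fin n) → ℝ) {S : Finset (Fin n)} (hS : S ⊆ U) :
    wt (insert i U) a (insert i S) = 4 * wt U (fun S => a (insert i S)) S := by
  unfold wt
  rw [Finset.sum_powerset_insert hi, Finset.mul_sum, Finset.sum_eq_zero, zero_add]
  · apply Finset.sum_congr rfl
    intro T hT
    have hiT : i ∉ T := fun h => hi (Finset.mem_powerset.1 hT h)
    have hiS : i ∉ S := fun h => hi (hS h)
    rw [Finset.card_insert_of_notMem hiT]
    have : insert i S ⊆ insert i T ↔ S ⊆ T := Finset.insert_subset_insert_iff hiS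
    simp only [this]
    split_ifs
    · ring
    · ring
  · intro T hT
    have hiT : i ∉ T := fun h => hi (Finset.mem_powerset.1 hT h)
    rw [if_neg]
    intro h
    exact hiT (h (Finset.mem_insert_self i S))

lemma moment_aux {p : ℝ} (hp : 0 < p) (hp' : p ≤ 1/2) (A B C D : ℝ) :
    p * ((A + (1 - p) / Real.sqrt (p * (1 - p)) * B) ^ 2
        * (C + (1 - p) / Real.sqrt (p * (1 - p)) * D) ^ 2)
      + (1 - p) * ((A + (- p) / Real.sqrt (p * (1 - p)) * B) ^ 2
        * (C + (- p) / Real.sqrt (p * (1 - p)) * D) ^ 2)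
      ≤ A ^ 2 * C ^ 2 + 4 * (A ^ 2 * D ^ 2) + 4 * (B ^ 2 * C ^ 2)
        + 3 * (1 / (p * (1 - p))) * (B ^ 2 * D ^ 2) := by
  have hs : 0 < p * (1 - p) := by nlinarith
  set s := Real.sqrt (p * (1 - p)) with hsdef
  have hs2 : s ^ 2 = p * (1 - p) := Real.sq_sqrt hs.le
  have hs0 : 0 < s := Real.sqrt_pos.2 hs
  rw [← hs2]
  set t := 1 / s with ht
  have hts : t ^ 2 * (p * (1 - p)) = 1 := by
    rw [ht, ← hs2]; field_simp
  have e1 : (1 - p) / s = (1 - p) * t := by rw [ht]; ring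
  have e2 : (-p) / s = (-p) * t := by rw [ht]; ring
  have e3 : 1 / s ^ 2 = t ^ 2 := by rw [ht]; field_simp
  rw [e1, e2, e3]
  have expand : p * ((A + (1 - p) * t * B) ^ 2 * (C + (1 - p) * t * D) ^ 2)
      + (1 - p) * ((A + (-p) * t * B) ^ 2 * (C + (-p) * t * D) ^ 2)
      = A ^ 2 * C ^ 2 + (t ^ 2 * (p * (1 - p))) * (A ^ 2 * D ^ 2 + B ^ 2 * C ^ 2 + 4 * A * B * C * D)
        + (t ^ 2 * (p * (1 - p))) * ((1 - 2 * p) * t) * (2 * A * B * D ^ 2 + 2 * B ^ 2 * C * D)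
        + (t ^ 2 * (p * (1 - p))) * (t ^ 2 * (1 - 3 * (p * (1 - p)))) * (B ^ 2 * D ^ 2) := by
    ring
  rw [expand, hts]
  have h1 : 0 ≤ (A * D - B * C) ^ 2 := sq_nonneg _
  have h2 : 0 ≤ (A * D - (1 - 2 * p) * t * (B * D)) ^ 2 := sq_nonneg _
  have h3 : 0 ≤ (B * C - (1 - 2 * p) * t * (B * D)) ^ 2 := sq_nonneg _
  have h4 : 0 ≤ (p * (1 - p)) * (t ^ 2 * (B ^ 2 * D ^ 2)) := by positivity
  nlinarith

lemma hyper {p : ℝ} (hp : 0 < p) (hp' : p ≤ 1/2) (U : Finset (Fin n)) :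
    ∀ a b : Finset (Fin n) → ℝ,
    Ep p (fun x => poly p U a x ^ 2 * poly p U b x ^ 2) ≤
      ∑ S ∈ U.powerset, (1 / (p * (1 - p))) ^ S.card * (wt U a S * wt U b S) := by
  have hs : 0 < p * (1 - p) := by nlinarith
  induction U using Finset.induction_on with
  | empty =>
    intro a b
    have : (fun x : Fin n → Bool => poly p ∅ a x ^ 2 * poly p ∅ b x ^ 2)
        = fun _ => (a ∅ ^ 2 * b ∅ ^ 2) * 1 := by
      funext x; simp [poly, chi]
    rw [this, Ep_const_mul, Ep_one]
    simp [wt]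
  | insert i U hi ih =>
    intro a b
    set a' : Finset (Fin n) → ℝ := fun S => a (insert i S) with ha'
    set b' : Finset (Fin n) → ℝ := fun S => b (insert i S) with hb'
    set c := 1 / (p * (1 - p)) with hc
    have hc0 : 0 ≤ c := by positivity
    have step : Ep p (fun x => poly p (insert i U) a x ^ 2 * poly p (insert i U) b x ^ 2) ≤
        Ep p (fun x => poly p U a x ^ 2 * poly p U b x ^ 2)
        + 4 * Ep p (fun x => poly p U a x ^ 2 * poly p U b' x ^ 2)
        + 4 * Ep p (fun x => poly p U a' x ^ 2 * poly p U b x ^ 2)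
        + (3 * c) * Ep p (fun x => poly p U a' x ^ 2 * poly p U b' x ^ 2) := by
      rw [Ep_split p i, ← Ep_const_mul, ← Ep_const_mul, ← Ep_const_mul, ← Ep_add, ← Ep_add,
        ← Ep_add]
      apply Ep_mono hp hp'
      intro x
      simp only [poly_insert p hi, poly_update p hi, phi_true, phi_false]
      exact moment_aux hp hp' _ _ _ _
    refine step.trans ?_
    have i1 := ih a b
    have i2 := ih a b'
    have i3 := ih a' b
    have i4 := ih a' b'
    have tot : ∑ S ∈ U.powerset, c ^ S.card * (wt U a S * wt U b S)
        + 4 * ∑ S ∈ U.powerset, c ^ S.card * (wt U a S * wt U b' S)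
        + 4 * ∑ S ∈ U.powerset, c ^ S.card * (wt U a' S * wt U b S)
        + (3 * c) * ∑ S ∈ U.powerset, c ^ S.card * (wt U a' S * wt U b' S)
        ≤ ∑ S ∈ (insert i U).powerset,
          c ^ S.card * (wt (insert i U) a S * wt (insert i U) b S) := by
      rw [Finset.sum_powerset_insert hi, Finset.mul_sum, Finset.mul_sum, Finset.mul_sum,
        ← Finset.sum_add_distrib, ← Finset.sum_add_distrib, ← Finset.sum_add_distrib,
        ← Finset.sum_add_distrib]
      apply Finset.sum_le_sum
      intro S hS
      have hSU := Finset.mem_powerset.1 hS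
      have hiS : i ∉ S := fun h => hi (hSU h)
      rw [wt_insert1 hi a hSU, wt_insert1 hi b hSU, wt_insert2 hi a hSU, wt_insert2 hi b hSU,
        Finset.card_insert_of_notMem hiS]
      have hk : 0 ≤ c ^ S.card * (wt U a' S * wt U b' S) :=
        mul_nonneg (pow_nonneg hc0 _) (mul_nonneg (wt_nonneg _ _ _) (wt_nonneg _ _ _))
      have hk2 : 0 ≤ c * (c ^ S.card * (wt U a' S * wt U b' S)) := mul_nonneg hc0 hk
      simp only [← ha', ← hb']
      rw [pow_succ]
      nlinarith
    have : (3 * c) * Ep p (fun x => poly p U a' x ^ 2 * poly p U b' x ^ 2) ≤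
        (3 * c) * ∑ S ∈ U.powerset, c ^ S.card * (wt U a' S * wt U b' S) :=
      mul_le_mul_of_nonneg_left i4 (by positivity)
    linarith

/-- fourth-moment bound for low-degree functions with small generalised influences -/
lemma fourth {p : ℝ} (hp : 0 < p) (hp' : p ≤ 1/2) (d : ℕ) (a : Finset (Fin n) → ℝ) (η : ℝ)
    (hdeg : ∀ S, d < S.card → a S = 0)
    (hη : ∀ S, ∑ T ∈ Finset.univ.filter (fun T => S ⊆ T), a T ^ 2 ≤ η * (p * (1 - p)) ^ S.card) :
    Ep p (fun x => poly p Finset.univ a x ^ 4) ≤ 125 ^ d * η * ∑ T, a T ^ 2 := by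
  have hs : 0 < p * (1 - p) := by nlinarith
  have hη0 : 0 ≤ η := by
    have h := hη ∅
    have h0 : 0 ≤ ∑ T ∈ Finset.univ.filter (fun T => (∅ : Finset (Fin n)) ⊆ T), a T ^ 2 :=
      Finset.sum_nonneg fun _ _ => sq_nonneg _
    simp only [Finset.card_empty, pow_zero, mul_one] at h
    linarith
  have h4 : (fun x => poly p Finset.univ a x ^ 4)
      = fun x => poly p Finset.univ a x ^ 2 * poly p Finset.univ a x ^ 2 := by
    funext x; ring
  rw [h4]
  refine (hyper hp hp' _ a a).trans ?_
  have hb : ∀ S, (1 / (p * (1 - p))) ^ S.card * wt Finset.univ a S ≤ 4 ^ d * η := by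
    intro S
    have : wt Finset.univ a S ≤ 4 ^ d * (η * (p * (1 - p)) ^ S.card) := by
      refine le_trans ?_ (mul_le_mul_of_nonneg_left (hη S) (by positivity))
      unfold wt
      rw [Finset.powerset_univ, ← Finset.sum_filter, Finset.mul_sum]
      apply Finset.sum_le_sum
      intro T _
      by_cases hT : d < T.card
      · simp [hdeg T hT]
      · apply mul_le_mul_of_nonneg_right _ (sq_nonneg _)
        exact pow_le_pow_right₀ (by norm_num) (not_lt.1 hT)
    calc (1 / (p * (1 - p))) ^ S.card * wt Finset.univ a S
        ≤ (1 / (p * (1 - p))) ^ S.card * (4 ^ d * (η * (p * (1 - p)) ^ S.card)) :=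
          mul_le_mul_of_nonneg_left this (by positivity)
      _ = 4 ^ d * η := by
          rw [div_pow, one_pow]
          field_simp
  calc ∑ S ∈ (Finset.univ : Finset (Fin n)).powerset, (1 / (p * (1 - p))) ^ S.card *
        (wt Finset.univ a S * wt Finset.univ a S)
      ≤ ∑ S ∈ (Finset.univ : Finset (Fin n)).powerset, (4 ^ d * η) * wt Finset.univ a S := by
        apply Finset.sum_le_sum
        intro S _
        rw [← mul_assoc]
        exact mul_le_mul_of_nonneg_right (hb S) (wt_nonneg _ _ _)
    _ = (4 ^ d * η) * ∑ T : Finset (Fin n), 8 ^ T.card * a T ^ 2 := by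
        rw [← Finset.mul_sum]
        congr 1
        unfold wt
        rw [Finset.sum_comm, Finset.powerset_univ]
        apply Finset.sum_congr rfl
        intro T _
        rw [← Finset.sum_filter, Finset.sum_const, nsmul_eq_mul]
        have : Finset.univ.filter (fun S => S ⊆ T) = T.powerset := by
          ext S; simp
        rw [this, Finset.card_powerset, ← mul_assoc]
        congr 1
        push_cast
        rw [← mul_pow]
        norm_num
    _ ≤ (4 ^ d * η) * ∑ T : Finset (Fin n), 8 ^ d * a T ^ 2 := by
        apply mul_le_mul_of_nonneg_left _ (by positivity)
        apply Finset.sum_le_sum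
        intro T _
        by_cases hT : d < T.card
        · simp [hdeg T hT]
        · apply mul_le_mul_of_nonneg_right _ (sq_nonneg _)
          exact pow_le_pow_right₀ (by norm_num) (not_lt.1 hT)
    _ = 32 ^ d * η * ∑ T, a T ^ 2 := by
        rw [← Finset.mul_sum]
        have : (32:ℝ) ^ d = 4 ^ d * 8 ^ d := by rw [← mul_pow]; norm_num
        rw [this]; ring
    _ ≤ 125 ^ d * η * ∑ T, a T ^ 2 := by
        have : (32:ℝ) ^ d ≤ 125 ^ d := pow_le_pow_left₀ (by norm_num) (by norm_num) d
        have h0 : 0 ≤ ∑ T, a T ^ 2 := Finset.sum_nonneg fun _ _ => sq_nonneg _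
        exact mul_le_mul_of_nonneg_right (mul_le_mul_of_nonneg_right this hη0) h0

lemma Ep_cs {p : ℝ} (hp : 0 < p) (hp' : p ≤ 1/2) (g h : (Fin n → Bool) → ℝ) :
    Ep p (fun x => g x * h x) ^ 2 ≤ Ep p (fun x => g x ^ 2) * Ep p (fun x => h x ^ 2) := by
  have hw : ∀ x : Fin n → Bool, 0 ≤ ∏ i, if x i then p else 1 - p := fun x =>
    Finset.prod_nonneg fun i _ => by split_ifs <;> linarith
  unfold Ep
  apply Finset.sum_sq_le_sum_mul_sum_of_sq_le_mul
  · intro x _; exact mul_nonneg (hw x) (sq_nonneg _)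
  · intro x _; exact mul_nonneg (hw x) (sq_nonneg _)
  · intro x _; exact le_of_eq (by ring)

lemma poly_norm {p : ℝ} (hp : 0 < p) (hp' : p ≤ 1/2) (s : Finset (Finset (Fin n)))
    (a : Finset (Fin n) → ℝ) (S : Finset (Fin n)) :
    coeff p (fun x => ∑ T ∈ s, a T * chi p T x) S = if S ∈ s then a S else 0 := by
  unfold coeff
  have : (fun x => (∑ T ∈ s, a T * chi p T x) * chi p S x)
      = fun x => ∑ T ∈ s, a T * (chi p T x * chi p S x) := by
    funext x
    rw [Finset.sum_mul]
    exact Finset.sum_congr rfl fun T _ => by ring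
  rw [this, Ep_sum]
  simp only [Ep_const_mul, chi_orth hp hp']
  simp

lemma Ep_mul_poly (p : ℝ) (s : Finset (Finset (Fin n)))
    (a : Finset (Fin n) → ℝ) (g : (Fin n → Bool) → ℝ) :
    Ep p (fun x => g x * ∑ T ∈ s, a T * chi p T x) = ∑ T ∈ s, a T * coeff p g T := by
  unfold coeff
  simp only [← Ep_const_mul]
  rw [← Ep_sum]
  congr 1
  funext x
  rw [Finset.mul_sum]
  exact Finset.sum_congr rfl fun T _ => by ring

lemma trunc_sq {p : ℝ} (hp : 0 < p) (hp' : p ≤ 1/2) (r : ℕ) (f : (Fin n → Bool) → ℝ) :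
    pnorm p 2 (trunc p r f) ^ 2 =
      ∑ S ∈ Finset.univ.filter (fun S : Finset (Fin n) => S.card ≤ r), coeff p f S ^ 2 := by
  have h : Ep p (fun x => |trunc p r f x| ^ (2:ℝ)) =
      ∑ S ∈ Finset.univ.filter (fun S : Finset (Fin n) => S.card ≤ r), coeff p f S ^ 2 := by
    have : (fun x => |trunc p r f x| ^ (2:ℝ)) = fun x => trunc p r f x *
        ∑ S ∈ Finset.univ.filter (fun S : Finset (Fin n) => S.card ≤ r),
          coeff p f S * chi p S x := by
      funext x
      rw [Real.rpow_two, sq_abs, sq]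
      rfl
    rw [this, Ep_mul_poly]
    apply Finset.sum_congr rfl
    intro S hS
    unfold trunc
    rw [poly_norm hp hp', if_pos hS, sq]
  unfold pnorm
  rw [h]
  have h0 : 0 ≤ ∑ S ∈ Finset.univ.filter (fun S : Finset (Fin n) => S.card ≤ r),
      coeff p f S ^ 2 := Finset.sum_nonneg fun _ _ => sq_nonneg _
  rw [← Real.sqrt_eq_rpow, Real.sq_sqrt h0]

lemma single {p δ : ℝ} {r : ℕ} (hp : 0 < p) (hp' : p ≤ 1/2) (hr : 1 ≤ r) (hδ : 0 < δ)
    (f : (Fin n → Bool) → ℝ) (hbool : ∀ x, f x = 0 ∨ f x = 1)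
    (hinf : ∀ S : Finset (Fin n), S.Nonempty → S.card ≤ r → genInf p S (trunc p r f) ≤ δ)
    (i : Fin n) :
    ∑ S ∈ Finset.univ.filter (fun S : Finset (Fin n) => S.card ≤ r ∧ i ∈ S), coeff p f S ^ 2
      ≤ (5 : ℝ) ^ (r - 1) * δ ^ ((1 : ℝ)/3) * (p * (1 - p)) *
        Ep p (fun x => if f (Function.update x i (!x i)) = f x then 0 else 1) := by
  have hs : 0 < p * (1 - p) := by nlinarith
  set L : (Fin n → Bool) → ℝ :=
    fun x => if f (Function.update x i (!x i)) = f x then 0 else 1 with hL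
  set s := Real.sqrt (p * (1 - p)) with hsdef
  have hs2 : s ^ 2 = p * (1 - p) := Real.sq_sqrt hs.le
  have hs0 : 0 < s := Real.sqrt_pos.2 hs
  set I := Ep p L with hI
  set a : Finset (Fin n) → ℝ :=
    fun S => if i ∉ S ∧ S.card + 1 ≤ r then coeff p f (insert i S) else 0 with ha
  set A := ∑ S ∈ Finset.univ.filter (fun S : Finset (Fin n) => S.card ≤ r ∧ i ∈ S),
    coeff p f S ^ 2 with hA
  have hA0 : 0 ≤ A := Finset.sum_nonneg fun _ _ => sq_nonneg _
  have hsumA : ∑ S, a S ^ 2 = A := by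
    rw [hA]
    have : ∀ S, a S ^ 2 = if i ∉ S ∧ S.card + 1 ≤ r then coeff p f (insert i S) ^ 2 else 0 := by
      intro S; simp only [ha]; split_ifs <;> simp
    simp only [this]
    rw [← Finset.sum_filter]
    refine Finset.sum_nbij' (fun S => insert i S) (fun S => S.erase i) ?_ ?_ ?_ ?_ ?_
    · intro S hS
      simp only [Finset.mem_filter, Finset.mem_univ, true_and] at hS ⊢
      rw [Finset.card_insert_of_notMem hS.1]
      exact ⟨hS.2, Finset.mem_insert_self _ _⟩
    · intro S hS
      simp only [Finset.mem_filter, Finset.mem_univ, true_and] at hS ⊢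
      refine ⟨Finset.notMem_erase _ _, ?_⟩
      rw [Finset.card_erase_add_one hS.2]
      exact hS.1
    · intro S hS
      simp only [Finset.mem_filter, Finset.mem_univ, true_and] at hS
      exact Finset.erase_insert hS.1
    · intro S hS
      simp only [Finset.mem_filter, Finset.mem_univ, true_and] at hS
      exact Finset.insert_erase hS.2
    · intro S _; rfl
  -- degree and influence bounds
  have hdeg : ∀ S, r - 1 < S.card → a S = 0 := by
    intro S hS
    simp only [ha]
    rw [if_neg]
    omega
  have hη : ∀ S, ∑ T ∈ Finset.univ.filter (fun T => S ⊆ T), a T ^ 2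
      ≤ (p * (1 - p) * δ) * (p * (1 - p)) ^ S.card := by
    intro S
    have hrhs : 0 ≤ (p * (1 - p) * δ) * (p * (1 - p)) ^ S.card := by positivity
    by_cases hS : i ∉ S ∧ S.card + 1 ≤ r
    · have h := hinf (insert i S) (Finset.insert_nonempty _ _)
        (by rw [Finset.card_insert_of_notMem hS.1]; exact hS.2)
      unfold genInf at h
      rw [div_le_iff₀ (by positivity), Finset.card_insert_of_notMem hS.1] at h
      have e : δ * (p * (1 - p)) ^ (S.card + 1) = (p * (1 - p) * δ) * (p * (1 - p)) ^ S.card := by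
        ring
      rw [← e]
      refine le_trans ?_ h
      have : ∀ T, a T ^ 2 = if i ∉ T ∧ T.card + 1 ≤ r then coeff p f (insert i T) ^ 2 else 0 := by
        intro T; simp only [ha]; split_ifs <;> simp
      simp only [this]
      rw [← Finset.sum_filter, Finset.filter_filter]
      have hinj : Set.InjOn (fun T => insert i T)
          (Finset.univ.filter (fun T : Finset (Fin n) => S ⊆ T ∧ i ∉ T ∧ T.card + 1 ≤ r) :
            Set (Finset (Fin n))) := by
        intro T hT T' hT' hTT
        simp only [Finset.coe_filter, Finset.mem_univ, true_and, Set.mem_ofPred_eq] at hT hT'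
        rw [← Finset.erase_insert hT.2.1, ← Finset.erase_insert hT'.2.1]
        exact congrArg (fun Z => Finset.erase Z i) hTT
      have hco : ∀ T ∈ Finset.univ.filter
          (fun T : Finset (Fin n) => S ⊆ T ∧ i ∉ T ∧ T.card + 1 ≤ r),
          coeff p f (insert i T) ^ 2 = coeff p (trunc p r f) (insert i T) ^ 2 := by
        intro T hT
        simp only [Finset.mem_filter, Finset.mem_univ, true_and] at hT
        unfold trunc
        rw [poly_norm hp hp', if_pos]
        simp only [Finset.mem_filter, Finset.mem_univ, true_and]
        rw [Finset.card_insert_of_notMem hT.2.1]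
        exact hT.2.2
      rw [Finset.sum_congr rfl hco,
        ← Finset.sum_image (f := fun T => coeff p (trunc p r f) T ^ 2) hinj]
      apply Finset.sum_le_sum_of_subset_of_nonneg
      · intro T hT
        simp only [Finset.mem_image, Finset.mem_filter, Finset.mem_univ, true_and] at hT ⊢
        obtain ⟨T', hT', rfl⟩ := hT
        exact Finset.insert_subset_insert i hT'.1
      · intro _ _ _; exact sq_nonneg _
    · rw [Finset.sum_eq_zero]
      · exact hrhs
      · intro T hT
        simp only [Finset.mem_filter, Finset.mem_univ, true_and] at hT
        simp only [ha]
        rw [if_neg]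
        · simp
        · rintro ⟨h1, h2⟩
          apply hS
          exact ⟨fun h => h1 (hT h), by have := Finset.card_le_card hT; omega⟩
  have h4 := fourth hp hp' (r - 1) a _ hdeg hη
  rw [hsumA] at h4
  set g := poly p Finset.univ a with hg
  have hgupd : ∀ x b, g (Function.update x i b) = g x := by
    intro x b
    simp only [hg, poly]
    apply Finset.sum_congr rfl
    intro S _
    by_cases hiS : i ∈ S
    · simp [ha, hiS]
    · rw [chi_update p hiS]
  -- A = E[f χ_i g]
  have hAg : A = Ep p (fun x => (f x * phi p i x) * g x) := by
    simp only [hg, poly]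
    rw [Ep_mul_poly, ← hsumA, Finset.powerset_univ]
    apply Finset.sum_congr rfl
    intro S _
    by_cases hS : i ∉ S ∧ S.card + 1 ≤ r
    · rw [sq]
      congr 1
      simp only [ha]
      rw [if_pos hS]
      unfold coeff
      congr 1
      funext x
      rw [chi_insert p hS.1]
      ring
    · simp only [ha]
      rw [if_neg hS]
      ring
  have hA1 : A ≤ s * Ep p (fun x => L x * |g x|) := by
    rw [hAg, Ep_split p i, ← Ep_const_mul]
    apply Ep_mono hp hp'
    intro x
    rw [hgupd, hgupd, phi_true, phi_false, ← hsdef]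
    have e : p * (f (Function.update x i true) * ((1 - p) / s) * g x)
        + (1 - p) * (f (Function.update x i false) * (-p / s) * g x)
        = s * ((f (Function.update x i true) - f (Function.update x i false)) * g x) := by
      field_simp
      rw [hs2]
      ring
    rw [e]
    apply mul_le_mul_of_nonneg_left _ hs0.le
    have hLx : L x = |f (Function.update x i true) - f (Function.update x i false)| := by
      simp only [hL]
      cases hx : x i
      · have : Function.update x i false = x := by rw [← hx]; simp
        rw [this]
        simp only [Bool.not_false]
        rcases hbool x with h1 | h1 <;> rcases hbool (Function.update x i true) with h2 | h2 <;>
          simp [h1, h2]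
      · have : Function.update x i true = x := by rw [← hx]; simp
        rw [this]
        simp only [Bool.not_true]
        rcases hbool x with h1 | h1 <;> rcases hbool (Function.update x i false) with h2 | h2 <;>
          simp [h1, h2]
    rw [hLx, ← abs_mul]
    exact le_abs_self _
  have hLL : ∀ x, L x ^ 2 = L x := by
    intro x; simp only [hL]; split_ifs <;> norm_num
  have hLnn : ∀ x, 0 ≤ L x := by
    intro x; simp only [hL]; split_ifs <;> norm_num
  have hEnn : ∀ h : (Fin n → Bool) → ℝ, (∀ x, 0 ≤ h x) → 0 ≤ Ep p h := by
    intro h hh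
    have := Ep_mono hp hp' (g := fun _ => 0) hh
    simpa [Ep] using this
  have hI0 : 0 ≤ I := hEnn _ hLnn
  set B := Ep p (fun x => L x * |g x|) with hB
  set Q := Ep p (fun x => L x * g x ^ 2) with hQ
  set F := Ep p (fun x => g x ^ 4) with hF
  have hB0 : 0 ≤ B := hEnn _ fun x => mul_nonneg (hLnn x) (abs_nonneg _)
  have hQ0 : 0 ≤ Q := hEnn _ fun x => mul_nonneg (hLnn x) (sq_nonneg _)
  have cs1 : B ^ 2 ≤ I * Q := by
    have h := Ep_cs hp hp' L (fun x => L x * |g x|)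
    have e1 : (fun x => L x * (L x * |g x|)) = fun x => L x * |g x| := by
      funext x; rw [← mul_assoc, ← sq, hLL]
    have e2 : (fun x => L x ^ 2) = L := by funext x; exact hLL x
    have e3 : (fun x => (L x * |g x|) ^ 2) = fun x => L x * g x ^ 2 := by
      funext x; rw [mul_pow, hLL, sq_abs]
    rw [e1, e2, e3] at h
    exact h
  have cs2 : Q ^ 2 ≤ I * F := by
    have h := Ep_cs hp hp' L (fun x => g x ^ 2)
    have e2 : (fun x => L x ^ 2) = L := by funext x; exact hLL x
    have e3 : (fun x => (g x ^ 2) ^ 2) = fun x => g x ^ 4 := by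
      funext x; ring
    rw [e2, e3] at h
    exact h
  have hB4 : B ^ 4 ≤ I ^ 3 * F := by
    calc B ^ 4 = (B ^ 2) ^ 2 := by ring
      _ ≤ (I * Q) ^ 2 := pow_le_pow_left₀ (sq_nonneg _) cs1 2
      _ = I ^ 2 * Q ^ 2 := by ring
      _ ≤ I ^ 2 * (I * F) := mul_le_mul_of_nonneg_left cs2 (sq_nonneg _)
      _ = I ^ 3 * F := by ring
  set D := (5 : ℝ) ^ (r - 1) * δ ^ ((1 : ℝ)/3) * (p * (1 - p)) * I with hD
  have hδ3 : (δ ^ ((1 : ℝ)/3)) ^ 3 = δ := by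
    rw [← Real.rpow_natCast, ← Real.rpow_mul hδ.le]; norm_num
  have hD0 : 0 ≤ D := by positivity
  have hD3 : D ^ 3 = 125 ^ (r - 1) * δ * (p * (1 - p)) ^ 3 * I ^ 3 := by
    have h5 : ((5:ℝ) ^ (r - 1)) ^ 3 = 125 ^ (r - 1) := by
      rw [← pow_mul, mul_comm, pow_mul]; norm_num
    rw [hD, mul_pow, mul_pow, mul_pow, hδ3, h5]
  have hA4 : A ^ 4 ≤ D ^ 3 * A := by
    calc A ^ 4 ≤ (s * B) ^ 4 := pow_le_pow_left₀ hA0 hA1 4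
      _ = (s ^ 2) ^ 2 * B ^ 4 := by ring
      _ = (p * (1 - p)) ^ 2 * B ^ 4 := by rw [hs2]
      _ ≤ (p * (1 - p)) ^ 2 * (I ^ 3 * F) := mul_le_mul_of_nonneg_left hB4 (by positivity)
      _ ≤ (p * (1 - p)) ^ 2 * (I ^ 3 * (125 ^ (r - 1) * (p * (1 - p) * δ) * A)) := by
          apply mul_le_mul_of_nonneg_left _ (by positivity)
          exact mul_le_mul_of_nonneg_left h4 (by positivity)
      _ = D ^ 3 * A := by rw [hD3]; ring
  rcases hA0.eq_or_lt with h | h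
  · rw [← h]; exact hD0
  · have h3 : A ^ 3 ≤ D ^ 3 := by
      have : A ^ 3 * A ≤ D ^ 3 * A := by rw [← pow_succ]; exact hA4
      exact le_of_mul_le_mul_right this h
    exact le_of_pow_le_pow_left₀ (by norm_num) hD0 h3

/-- bounding the low-degree weight in terms of the total influence. -/
theorem statement10 {n : ℕ} (p δ : ℝ) (r : ℕ) (hp : 0 < p) (hp' : p ≤ 1/2)
    (hr : 1 ≤ r) (hδ : 0 < δ)
    (f : (Fin n → Bool) → ℝ) (hbool : ∀ x, f x = 0 ∨ f x = 1)
    (hinf : ∀ S : Finset (Fin n), S.Nonempty → S.card ≤ r → genInf p S (trunc p r f) ≤ δ) :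
    pnorm p 2 (trunc p r f) ^ 2 ≤
      Ep p f ^ 2 + (5 : ℝ) ^ (r - 1) * δ ^ ((1 : ℝ)/3) * (p * (1 - p)) * totalInf p f := by
  rw [trunc_sq hp hp']
  have h1 : ∑ S ∈ Finset.univ.filter (fun S : Finset (Fin n) => S.card ≤ r), coeff p f S ^ 2
      ≤ Ep p f ^ 2 + ∑ S ∈ Finset.univ.filter (fun S : Finset (Fin n) => S.card ≤ r),
          (S.card : ℝ) * coeff p f S ^ 2 := by
    have hmem : (∅ : Finset (Fin n)) ∈
        Finset.univ.filter (fun S : Finset (Fin n) => S.card ≤ r) := by simp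
    rw [← Finset.add_sum_erase _ _ hmem, ← Finset.add_sum_erase _ (fun S : Finset (Fin n) =>
      (S.card : ℝ) * coeff p f S ^ 2) hmem]
    have e : coeff p f ∅ = Ep p f := by simp [coeff, chi]
    rw [e]
    simp only [Finset.card_empty, Nat.cast_zero, zero_mul, zero_add]
    apply add_le_add_right
    apply Finset.sum_le_sum
    intro S hS
    have hne : S ≠ ∅ := Finset.ne_of_mem_erase hS
    have hc : (1:ℝ) ≤ S.card := by
      exact_mod_cast Finset.card_pos.2 (Finset.nonempty_iff_ne_empty.2 hne)
    nlinarith [sq_nonneg (coeff p f S)]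
  refine h1.trans ?_
  apply add_le_add_right
  have h2 : ∑ S ∈ Finset.univ.filter (fun S : Finset (Fin n) => S.card ≤ r),
      (S.card : ℝ) * coeff p f S ^ 2 = ∑ i : Fin n,
      ∑ S ∈ Finset.univ.filter (fun S : Finset (Fin n) => S.card ≤ r ∧ i ∈ S),
        coeff p f S ^ 2 := by
    simp only [← Finset.filter_filter]
    simp only [Finset.sum_filter (fun S => _ ∈ S)]
    rw [Finset.sum_comm]
    apply Finset.sum_congr rfl
    intro S _
    rw [← Finset.sum_filter, Finset.sum_const, nsmul_eq_mul]
    congr 2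
    simp
  rw [h2]
  unfold totalInf
  rw [Finset.mul_sum]
  exact Finset.sum_le_sum fun i _ => single hp hp' hr hδ f hbool hinf i

end GlobalHC
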